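/- A function $g$ on $\mathbb R^2$ is of *standard form* on an open neighborhood $U$ of the origin if $g=\chi_E\prod_{j=1}^n|f_j|^{\gamma_j}$, where the $f_j$ are real analytic on $U$ and not identically zero near the origin, the $\gamma_j$ are real, $g$ is integrable on $U$, and $E$ is either a disk centered at $0$ or a finite disjoint union of open regions, each of which is one of the two regions into which a disk $x^2+y^2<r^2$ is cut by two curves joining the origin to the circle $x^2+y^2=r^2$; each curve is an arc of one half of a graph $y=h(|x|^{1/N})$ or $x=h(|y|^{1/N})$ with $h$ real analytic, $h(0)=0$, and all the curves are pairwise disjoint away from the origin. For a unit vector $v=(v_1,v_2)$ and $v^\perp=(v_2,-v_1)$, a number $\delta_v>0$ is the *strip exponent* of $g$ in direction $v$ if for some $e_v\in\{0,1\}$ and each sufficiently small $c'>0$, the integral $\int_{\{|(x,y)\cdot v|<r,\ |(x,y)\cdot v^\perp|<c'\}}g\,dx\,dy$ is bounded above and below by positive constant multiples (depending on $c'$) of $r^{\delta_v}|\ln r|^{e_v}$ for $0<r<c'$. Suppose $m=\sum_{i=1}^K m_i$, where each $m_i$ is compactly supported and nonnegative, and for some point $(x_i,y_i)$ and some open neighborhood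 $U_i$ of the origin with $\operatorname{supp} m_i\subset (x_i,y_i)+U_i$ one has $m_i(x_i+x,y_i+y)=\alpha_i(x,y)g_i(x,y)$ for almost all $(x,y)\in U_i$. Here $g_i$ is of standard form on $U_i$ with set $E_i$, and $\alpha_i$ is $C^1$ on $U_i\setminus\{0\}$ and satisfies there, for a constant $A$, $|\alpha_i|\le A$ and $|\nabla\alpha_i(x,y)|\le A(x^2+y^2)^{-1/2}$. Let $K(t,u)=\int_{\mathbb R^2}m(x,y)e^{i(tx+uy)}\,dx\,dy$. Fix an index $i_0$ such that for some $c>0$ one has $\alpha_{i_0}>c$ at all points of $E_{i_0}\setminus\{0\}$ sufficiently close to the origin. Let $v$ be a unit vector such that the strip exponent $\delta_v$ of $g_{i_0}$ in direction $v$ satisfies $\delta_v<1$, let $l$ be the line through the origin in direction $v$, let $H>0$, and let $l_H$ be the set of points of $\mathbb R^2$ within distance $H$ of $l$. Then for any $\delta>\delta_v$ there is no constant $C$ with $|K(t,u)|\le C(2+|(t,u)|)^{-\delta}$ for all $(t,u)\in l_H$; that is, a sharp directional estimate for one summand remains sharp for the sum. -/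

import Mathlib

open MeasureTheory Set Filter
open scoped Topology

noncomputable section

/-- The Euclidean magnitude `|(x,y)| = √(x²+y²)` (the norm of `ℝ × ℝ` in Mathlib is the sup norm). -/
def nrm2 (p : ℝ × ℝ) : ℝ := Real.sqrt (p.1 ^ 2 + p.2 ^ 2)

/-- The open Euclidean disk `{(x,y) : x²+y² < r²}` centered at the origin. -/
def disk2 (r : ℝ) : Set (ℝ × ℝ) := {p : ℝ × ℝ | p.1 ^ 2 + p.2 ^ 2 < r ^ 2}

/-- The circle `{(x,y) : x²+y² = r²}` centered at the origin. -/
def circle2 (r : ℝ) : Set (ℝ × ℝ) := {p : ℝ × ℝ | p.1 ^ 2 + p.2 ^ 2 = r ^ 2}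

/-- Dot product on `ℝ²`. -/
def dot2 (p q : ℝ × ℝ) : ℝ := p.1 * q.1 + p.2 * q.2

/-- The perpendicular vector `v^⊥ = (v₂, −v₁)`. -/
def perp2 (v : ℝ × ℝ) : ℝ × ℝ := (v.2, -v.1)

/-- The function `g = χ_E · ∏ⱼ |fⱼ|^(γⱼ)`. -/
def stdFun (n : ℕ) (f : Fin n → ℝ × ℝ → ℝ) (γ : Fin n → ℝ) (E : Set (ℝ × ℝ)) :
    ℝ × ℝ → ℝ :=
  E.indicator fun p => ∏ j, |f j p| ^ (γ j)

/-- A boundary curve: an arc of one half (`σ = 1` or `σ = -1`) of a graph `y = h(|x|^{1/N})` or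
`x = h(|y|^{1/N})`, with `h` real analytic and `h 0 = 0`, which starts at the origin, stays in the
open disk of radius `r`, and ends on the circle of radius `r`. -/
def IsPuiseuxArc (r : ℝ) (C : Set (ℝ × ℝ)) : Prop :=
  ∃ (N : ℕ) (h : ℝ → ℝ) (σ b : ℝ),
    0 < N ∧ (σ = 1 ∨ σ = -1) ∧ 0 < b ∧
    AnalyticOnNhd ℝ h (Icc 0 (b ^ ((N : ℝ)⁻¹))) ∧ h 0 = 0 ∧
    (∀ s, 0 ≤ s → s < b → (s, h (s ^ ((N : ℝ)⁻¹))) ∈ disk2 r) ∧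
    (b, h (b ^ ((N : ℝ)⁻¹))) ∈ circle2 r ∧
    (C = (fun s : ℝ => (σ * s, h (s ^ ((N : ℝ)⁻¹)))) '' Icc 0 b ∨
     C = (fun s : ℝ => (h (s ^ ((N : ℝ)⁻¹)), σ * s)) '' Icc 0 b)

/-- `R` is one of the regions into which two curves `C₁`, `C₂` cut the open disk of radius `r`:
an open connected subset of the disk minus the curves whose boundary lies on the two curves and
the circle. -/
def IsRegionBetween (r : ℝ) (C₁ C₂ R : Set (ℝ × ℝ)) : Prop :=
  IsOpen R ∧ IsConnected R ∧ R ⊆ disk2 r \ (C₁ ∪ C₂) ∧ frontier R ⊆ C₁ ∪ C₂ ∪ circle2 r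

/-- The admissible sets `E`: a disk centered at the origin, or a finite disjoint union of regions
each bounded by two Puiseux arcs joining the origin to a fixed circle and by that circle, where
all the arcs are pairwise disjoint except for their common starting point, the origin. -/
def IsStdDomain (E : Set (ℝ × ℝ)) : Prop :=
  (∃ r > (0 : ℝ), E = disk2 r) ∨
  (∃ r > (0 : ℝ), ∃ m : ℕ, 0 < m ∧
    ∃ (R : Fin m → Set (ℝ × ℝ)) (C : Fin m × Fin 2 → Set (ℝ × ℝ)),
      E = ⋃ i, R i ∧
      (Pairwise fun i j => Disjoint (R i) (R j)) ∧
      (∀ q, IsPuiseuxArc r (C q)) ∧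
      (Pairwise fun q q' => Disjoint (C q \ {0}) (C q' \ {0})) ∧
      (∀ i, IsRegionBetween r (C (i, 0)) (C (i, 1)) (R i)))

/-- `g = χ_E ∏ |fⱼ|^(γⱼ)` is of the standard form on the open neighborhood `U` of the origin:
the `fⱼ` are real analytic on `U`, none vanishes identically near the origin, `E` is an
admissible set, and `g` is integrable on `U`. -/
structure StandardFormOn (U : Set (ℝ × ℝ)) (n : ℕ) (f : Fin n → ℝ × ℝ → ℝ) (γ : Fin n → ℝ)
    (E : Set (ℝ × ℝ)) : Prop where
  isOpen : IsOpen U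
  zero_mem : (0 : ℝ × ℝ) ∈ U
  analytic : ∀ j, AnalyticOnNhd ℝ (f j) U
  nontriv : ∀ j, ¬ ∀ᶠ p in 𝓝 (0 : ℝ × ℝ), f j p = 0
  domain : IsStdDomain E
  integrable : IntegrableOn (stdFun n f γ E) U

/-- The Euclidean length `|∇α(p)|` of the gradient. -/
def gradNorm (α : ℝ × ℝ → ℝ) (p : ℝ × ℝ) : ℝ :=
  nrm2 (fderiv ℝ α p (1, 0), fderiv ℝ α p (0, 1))

/-- On `U` and away from the origin, `α` is `C¹`, `|α| ≤ A` and `|∇α| ≤ A (x²+y²)^{-1/2}`. -/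
def AlphaBoundOn (U : Set (ℝ × ℝ)) (α : ℝ × ℝ → ℝ) (A : ℝ) : Prop :=
  ContDiffOn ℝ 1 α (U \ {0}) ∧
    ∀ p ∈ U \ {0}, |α p| ≤ A ∧ gradNorm α p ≤ A * (nrm2 p)⁻¹

/-- The strip `{(x,y) : |(x,y)·v| < r, |(x,y)·v^⊥| < c}`. -/
def strip2 (v : ℝ × ℝ) (r c : ℝ) : Set (ℝ × ℝ) :=
  {p : ℝ × ℝ | |dot2 p v| < r ∧ |dot2 p (perp2 v)| < c}

/-- `δ` is the strip exponent of `g` in the direction `v`, with logarithmic exponent `e ∈ {0,1}`: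
for every small `c`, `∫_{strip2 v r c} g` is comparable to `r^δ |ln r|^e` for `0 < r < c`. -/
def IsStripExponent (g : ℝ × ℝ → ℝ) (v : ℝ × ℝ) (δ : ℝ) (e : ℕ) : Prop :=
  0 < δ ∧ e ≤ 1 ∧ ∃ cv > (0 : ℝ), ∀ c : ℝ, 0 < c → c < cv →
    ∃ a > (0 : ℝ), ∃ b > (0 : ℝ), ∀ r : ℝ, 0 < r → r < c →
      a * r ^ δ * |Real.log r| ^ e ≤ (∫ p in strip2 v r c, g p) ∧
      (∫ p in strip2 v r c, g p) ≤ b * r ^ δ * |Real.log r| ^ e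

/-- The set `l_H` of points within Euclidean distance `H` of the line `l = ℝ v`. -/
def lineNbhd (v : ℝ × ℝ) (H : ℝ) : Set (ℝ × ℝ) := {q | ∃ s : ℝ, nrm2 (q - s • v) ≤ H}

/-- The convolution kernel `K(t,u) = ∫ m(x,y) e^{i(tx+uy)} dx dy`. -/
def kernel2 (m : ℝ × ℝ → ℝ) (q : ℝ × ℝ) : ℂ :=
  ∫ p : ℝ × ℝ, (m p : ℂ) * Complex.exp (Complex.I * (dot2 q p : ℂ))

end

/-- Fubini for the Fourier transform along a line, tested against a modulated Gaussian. -/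
lemma integral_gaussian_mul_kernel2 {m : ℝ × ℝ → ℝ} (hm : Integrable m) (v : ℝ × ℝ) (x₀ : ℝ)
    {b : ℝ} (hb : 0 < b) :
    ∫ s : ℝ, (Real.exp (-b * s ^ 2) : ℂ) *
        (Complex.exp (-(Complex.I * s * x₀)) * kernel2 m (s • v)) =
      ((Real.sqrt (Real.pi / b) *
        ∫ p, m p * Real.exp (-(dot2 p v - x₀) ^ 2 / (4 * b)) : ℝ) : ℂ) := by
  let F : ℝ → ℝ × ℝ → ℂ := fun s p =>
    Complex.exp (((s * (dot2 p v - x₀) : ℝ) : ℂ) * Complex.I) *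
      ((Real.exp (-b * s ^ 2) : ℂ) * (m p : ℂ))
  have hF : Integrable (Function.uncurry F) (volume.prod volume) := by
    have h1 : Integrable (fun s : ℝ => (Real.exp (-b * s ^ 2) : ℂ)) :=
      (integrable_exp_neg_mul_sq hb).ofReal
    have h2 : Integrable (fun p => (m p : ℂ)) := hm.ofReal
    refine (h1.mul_prod h2).bdd_mul (c := 1) ?_ ?_
    · apply Continuous.aestronglyMeasurable
      unfold dot2
      fun_prop
    · exact ae_of_all _ fun z => (Complex.norm_exp_ofReal_mul_I _).le
  have hswap := integral_integral_swap hF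
  have hl : ∀ s : ℝ, ∫ p, F s p = (Real.exp (-b * s ^ 2) : ℂ) *
      (Complex.exp (-(Complex.I * s * x₀)) * kernel2 m (s • v)) := by
    intro s
    rw [kernel2, ← integral_const_mul, ← integral_const_mul]
    refine integral_congr_ae (ae_of_all _ fun p => ?_)
    have : Complex.exp (((s * (dot2 p v - x₀) : ℝ) : ℂ) * Complex.I) =
        Complex.exp (-(Complex.I * s * x₀)) *
          Complex.exp (Complex.I * (dot2 (s • v) p : ℂ)) := by
      rw [← Complex.exp_add]
      congr 1
      simp only [dot2, Prod.smul_fst, Prod.smul_snd, smul_eq_mul]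
      push_cast
      ring
    simp only [F, this]
    ring
  have hr : ∀ p, ∫ s, F s p = ((Real.sqrt (Real.pi / b) *
      (m p * Real.exp (-(dot2 p v - x₀) ^ 2 / (4 * b))) : ℝ) : ℂ) := by
    intro p
    have hg := fourierIntegral_gaussian (b := (b : ℂ)) (by simpa using hb)
      ((dot2 p v - x₀ : ℝ) : ℂ)
    have : ∀ s : ℝ, F s p = (m p : ℂ) * (Complex.exp (Complex.I * ((dot2 p v - x₀ : ℝ) : ℂ) * s) *
        Complex.exp (-(b : ℂ) * (s : ℂ) ^ 2)) := by
      intro s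
      simp only [F]
      push_cast
      rw [show (s : ℂ) * ((dot2 p v : ℂ) - x₀) * Complex.I =
        Complex.I * ((dot2 p v : ℂ) - x₀) * s by ring]
      ring
    simp_rw [this]
    rw [integral_const_mul, hg]
    have hs : ((Real.pi : ℂ) / b) ^ (1 / 2 : ℂ) = ((Real.sqrt (Real.pi / b) : ℝ) : ℂ) := by
      rw [Real.sqrt_eq_rpow, Complex.ofReal_cpow (by positivity)]
      push_cast
      rfl
    rw [hs]
    push_cast
    ring
  simp_rw [hl, hr] at hswap
  rw [hswap, integral_complex_ofReal, integral_const_mul]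

lemma integrable_abs_rpow_mul_gaussian {δ : ℝ} (hδ : δ < 1) :
    Integrable fun s : ℝ => |s| ^ (-δ) * Real.exp (-s ^ 2) := by
  have h := (integrable_fun_norm_addHaar (E := ℝ) volume
    (f := fun y : ℝ => y ^ (-δ) * Real.exp (-y ^ 2))).2 (by
      simpa using integrableOn_rpow_mul_exp_neg_mul_sq (b := 1) one_pos (s := -δ) (by linarith))
  simpa using h

lemma abs_rpow_mul_gaussian_scale {δ r : ℝ} (hr : 0 < r) (s : ℝ) :
    |s| ^ (-δ) * Real.exp (-r ^ 2 * s ^ 2) =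
      r ^ δ * (|r * s| ^ (-δ) * Real.exp (-(r * s) ^ 2)) := by
  rw [abs_mul, abs_of_pos hr, Real.mul_rpow hr.le (abs_nonneg s), ← mul_assoc, ← mul_assoc,
    ← Real.rpow_add hr, mul_pow]
  simp

/-- Decay `|s|^{-δ}` of the Fourier transform of a positive density along a line bounds the mass
of slabs of width `r` orthogonal to that line by a multiple of `r^δ`. -/
lemma slab_mass_le_of_kernel2_decay {m : ℝ × ℝ → ℝ} (hm : Integrable m) (hm0 : ∀ p, 0 ≤ m p)
    (v : ℝ × ℝ) {C δ : ℝ} (hδ : δ < 1)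
    (hK : ∀ s : ℝ, s ≠ 0 → ‖kernel2 m (s • v)‖ ≤ C * |s| ^ (-δ)) (x₀ : ℝ) :
    ∃ D : ℝ, ∀ r : ℝ, 0 < r → ∫ p in {p | |dot2 p v - x₀| < r}, m p ≤ D * r ^ δ := by
  set M := ∫ s : ℝ, |s| ^ (-δ) * Real.exp (-s ^ 2) with hM
  refine ⟨C * M / (Real.sqrt Real.pi * Real.exp (-1 / 4)), fun r hr => ?_⟩
  have hpos : 0 < Real.sqrt Real.pi * Real.exp (-1 / 4) := by positivity
  set S := {p : ℝ × ℝ | |dot2 p v - x₀| < r} with hS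
  have hSm : MeasurableSet S := by
    apply (isOpen_lt _ continuous_const).measurableSet
    unfold dot2
    fun_prop
  have hr2 : 0 < r ^ 2 := by positivity
  have hgi : Integrable fun p => m p * Real.exp (-(dot2 p v - x₀) ^ 2 / (4 * r ^ 2)) := by
    refine hm.mul_bdd (c := 1) ?_ (ae_of_all _ fun p => ?_)
    · apply Continuous.aestronglyMeasurable
      unfold dot2
      fun_prop
    · rw [Real.norm_eq_abs, Real.abs_exp, Real.exp_le_one_iff]
      apply div_nonpos_of_nonpos_of_nonneg _ (by positivity)
      nlinarith [sq_nonneg (dot2 p v - x₀)]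
  have hlow : Real.exp (-1 / 4) * ∫ p in S, m p ≤
      ∫ p, m p * Real.exp (-(dot2 p v - x₀) ^ 2 / (4 * r ^ 2)) := by
    rw [← integral_const_mul]
    refine (setIntegral_mono_on (hm.integrableOn.const_mul _) hgi.integrableOn hSm
      fun p hp => ?_).trans (setIntegral_le_integral hgi (ae_of_all _ fun p =>
        mul_nonneg (hm0 p) (Real.exp_pos _).le))
    rw [mul_comm]
    refine mul_le_mul_of_nonneg_left (Real.exp_le_exp.2 ?_) (hm0 p)
    have h1 : (dot2 p v - x₀) ^ 2 ≤ r ^ 2 := sq_le_sq' (abs_lt.1 hp).1.le (abs_lt.1 hp).2.le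
    rw [div_le_div_iff₀ (by norm_num) (by positivity)]
    nlinarith
  have hup : Real.sqrt (Real.pi / r ^ 2) *
      ∫ p, m p * Real.exp (-(dot2 p v - x₀) ^ 2 / (4 * r ^ 2)) ≤ C * (r ^ δ * (r⁻¹ * M)) := by
    have hnorm := congrArg norm (integral_gaussian_mul_kernel2 hm v x₀ hr2)
    rw [Complex.norm_real] at hnorm
    refine (le_abs_self _).trans (hnorm.symm.le.trans ?_)
    have hint := (integrable_abs_rpow_mul_gaussian hδ).comp_mul_left' hr.ne'
    have hval : ∫ s : ℝ, C * (r ^ δ * (|r * s| ^ (-δ) * Real.exp (-(r * s) ^ 2))) =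
        C * (r ^ δ * (r⁻¹ * M)) := by
      rw [integral_const_mul, integral_const_mul,
        Measure.integral_comp_mul_left (fun s : ℝ => |s| ^ (-δ) * Real.exp (-s ^ 2)),
        abs_of_pos (inv_pos.2 hr), smul_eq_mul]
    rw [← hval]
    refine norm_integral_le_of_norm_le ((hint.const_mul _).const_mul _) ?_
    have h0 : ∀ᵐ s : ℝ, s ≠ 0 := by simp [ae_iff]
    filter_upwards [h0] with s hs
    rw [← abs_rpow_mul_gaussian_scale hr, norm_mul, norm_mul, Complex.norm_real,
      Real.norm_eq_abs, Real.abs_exp]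
    have hu : ‖Complex.exp (-(Complex.I * s * x₀))‖ = 1 := by
      rw [show -(Complex.I * s * x₀) = ((-(s * x₀) : ℝ) : ℂ) * Complex.I by push_cast; ring,
        Complex.norm_exp_ofReal_mul_I]
    rw [hu, one_mul]
    nlinarith [mul_le_mul_of_nonneg_left (hK s hs) (Real.exp_pos (-r ^ 2 * s ^ 2)).le]
  rw [Real.sqrt_div Real.pi_pos.le, Real.sqrt_sq hr.le] at hup
  have h2 : Real.sqrt Real.pi / r * (Real.exp (-1 / 4) * ∫ p in S, m p) ≤
      C * (r ^ δ * (r⁻¹ * M)) :=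
    (mul_le_mul_of_nonneg_left hlow (by positivity)).trans hup
  rw [div_mul_eq_mul_div, le_div_iff₀ hpos]
  calc (∫ p in S, m p) * (Real.sqrt Real.pi * Real.exp (-1 / 4))
      = r * (Real.sqrt Real.pi / r * (Real.exp (-1 / 4) * ∫ p in S, m p)) := by field_simp
    _ ≤ r * (C * (r ^ δ * (r⁻¹ * M))) := mul_le_mul_of_nonneg_left h2 hr.le
    _ = C * M * r ^ δ := by field_simp

lemma stdFun_nonneg (n : ℕ) (f : Fin n → ℝ × ℝ → ℝ) (γ : Fin n → ℝ) (E : Set (ℝ × ℝ))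
    (p : ℝ × ℝ) : 0 ≤ stdFun n f γ E p :=
  indicator_nonneg (fun _ _ => Finset.prod_nonneg fun _ _ => Real.rpow_nonneg (abs_nonneg _) _) p

/-- A function which is locally a bounded continuous multiple of an integrable one, and is
supported there, is integrable. -/
lemma integrable_of_eq_mul_on {μ g α : ℝ × ℝ → ℝ} {U : Set (ℝ × ℝ)} {z : ℝ × ℝ} {A : ℝ}
    (hU : IsOpen U) (hg : IntegrableOn g U) (hα : AlphaBoundOn U α A)
    (hsupp : ∀ p, z + p ∈ tsupport μ → p ∈ U)
    (hform : ∀ᵐ p : ℝ × ℝ, p ∈ U → μ (z + p) = α p * g p) : Integrable μ := by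
  have hU0 : (U \ {0} : Set (ℝ × ℝ)) =ᵐ[volume] U :=
    sdiff_null_ae_eq_self (measure_singleton _)
  have hmeas : MeasurableSet (U \ {0} : Set (ℝ × ℝ)) :=
    hU.measurableSet.diff (measurableSet_singleton _)
  have h1 : IntegrableOn (fun p => α p * g p) (U \ {0}) := by
    refine Integrable.bdd_mul (c := A) (hg.mono_set sdiff_subset)
      (hα.1.continuousOn.aestronglyMeasurable hmeas) ?_
    exact (ae_restrict_iff' hmeas).2 (ae_of_all _ fun p hp => (hα.2 p hp).1)
  have h2 : IntegrableOn (fun p => μ (z + p)) U :=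
    (h1.congr_set_ae hU0.symm).congr_fun_ae
      ((ae_restrict_iff' hU.measurableSet).2 (hform.mono fun p hp hpU => (hp hpU).symm))
  have h3 : Integrable fun p => μ (z + p) := by
    refine (integrableOn_iff_integrable_of_support_subset fun p hp => hsupp p ?_).1 h2
    exact subset_tsupport _ hp
  simpa using h3.comp_add_left (-z)

lemma norm_le_of_mem_strip2 {v : ℝ × ℝ} (hv : nrm2 v = 1) {r c : ℝ} {p : ℝ × ℝ}
    (hp : p ∈ strip2 v r c) : ‖p‖ ≤ r + c := by
  have hsq : v.1 ^ 2 + v.2 ^ 2 = 1 := by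
    rw [nrm2, Real.sqrt_eq_one] at hv
    exact hv
  have h1 : |v.1| ≤ 1 := by
    rw [← sq_le_one_iff_abs_le_one]
    nlinarith [sq_nonneg v.2]
  have h2 : |v.2| ≤ 1 := by
    rw [← sq_le_one_iff_abs_le_one]
    nlinarith [sq_nonneg v.1]
  have key : ∀ a b x y : ℝ, |a| < r → |b| < c → |x| ≤ 1 → |y| ≤ 1 → |a * x + b * y| ≤ r + c := by
    intro a b x y ha hb hx hy
    refine (abs_add_le _ _).trans ?_
    rw [abs_mul, abs_mul]
    nlinarith [abs_nonneg a, abs_nonneg b, abs_nonneg x, abs_nonneg y]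
  rw [Prod.norm_def, Real.norm_eq_abs, Real.norm_eq_abs]
  refine max_le ?_ ?_
  · have : p.1 = dot2 p v * v.1 + dot2 p (perp2 v) * v.2 := by
      simp only [dot2, perp2]
      linear_combination (-p.1) * hsq
    rw [this]
    exact key _ _ _ _ hp.1 hp.2 h1 h2
  · have : p.2 = dot2 p v * v.2 + dot2 p (perp2 v) * (-v.1) := by
      simp only [dot2, perp2]
      linear_combination (-p.2) * hsq
    rw [this]
    exact key _ _ _ _ hp.1 hp.2 h2 (by rwa [abs_neg])

lemma measurableSet_strip2 (v : ℝ × ℝ) (r c : ℝ) : MeasurableSet (strip2 v r c) := by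
  refine MeasurableSet.inter (s₁ := {p | |dot2 p v| < r}) (s₂ := {p | |dot2 p (perp2 v)| < c}) ?_ ?_
  · apply (isOpen_lt _ continuous_const).measurableSet
    unfold dot2
    fun_prop
  · apply (isOpen_lt _ continuous_const).measurableSet
    unfold dot2
    fun_prop

lemma nrm2_smul_unit {v : ℝ × ℝ} (hv : nrm2 v = 1) (s : ℝ) : nrm2 (s • v) = |s| := by
  have hsq : v.1 ^ 2 + v.2 ^ 2 = 1 := by
    rw [nrm2, Real.sqrt_eq_one] at hv
    exact hv
  rw [nrm2, ← Real.sqrt_sq_eq_abs]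
  congr 1
  simp only [Prod.smul_fst, Prod.smul_snd, smul_eq_mul]
  linear_combination s ^ 2 * hsq

/-- If `m` dominates `κ g` near `z`, slabs through `z` carry at least `κ` times the mass which `g`
gives to the corresponding strips. -/
lemma strip_mass_le_slab_mass {m g : ℝ × ℝ → ℝ} (hm : Integrable m) (hm0 : ∀ p, 0 ≤ m p)
    {z v : ℝ × ℝ} {r c κ : ℝ} (hg : IntegrableOn g (strip2 v r c))
    (hle : ∀ᵐ p : ℝ × ℝ, p ∈ strip2 v r c → κ * g p ≤ m (z + p)) :
    κ * ∫ p in strip2 v r c, g p ≤ ∫ p in {p | |dot2 p v - dot2 z v| < r}, m p := by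
  set S := {p : ℝ × ℝ | |dot2 p v - dot2 z v| < r} with hS
  have hmz : Integrable fun p => m (z + p) := hm.comp_add_left z
  have hpre : (fun p => z + p) ⁻¹' S = {p | |dot2 p v| < r} := by
    ext p
    simp only [hS, mem_preimage, mem_ofPred_eq, dot2, Prod.fst_add, Prod.snd_add]
    ring_nf
  have hshift : ∫ p in S, m p = ∫ p in {p | |dot2 p v| < r}, m (z + p) := by
    rw [← hpre]
    exact ((measurePreserving_add_left volume z).setIntegral_preimage_emb
      (measurableEmbedding_addLeft z) m S).symm
  rw [hshift, ← integral_const_mul]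
  refine (setIntegral_mono_on_ae (hg.const_mul κ) hmz.integrableOn
    (measurableSet_strip2 v r c) hle).trans ?_
  exact setIntegral_mono_set hmz.integrableOn (ae_of_all _ fun p => hm0 _)
    (LE.le.eventuallyLE fun p hp => hp.1)

lemma not_rpow_le_mul_rpow_near_zero {δ₀ δ a D ε : ℝ} (hδ : δ₀ < δ) (ha : 0 < a) (hε : 0 < ε) :
    ¬ ∀ r : ℝ, 0 < r → r < ε → a * r ^ δ₀ ≤ D * r ^ δ := by
  intro h
  have hlim : Tendsto (fun r : ℝ => D * r ^ (δ - δ₀)) (𝓝[>] 0) (𝓝 (D * 0)) := by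
    refine Tendsto.const_mul _ ?_
    have := (Real.continuousAt_rpow_const 0 (δ - δ₀) (Or.inr (by linarith))).tendsto
    rw [Real.zero_rpow (by linarith)] at this
    exact this.mono_left nhdsWithin_le_nhds
  rw [mul_zero] at hlim
  have hev : ∀ᶠ r : ℝ in 𝓝[>] 0, a ≤ D * r ^ (δ - δ₀) := by
    filter_upwards [Ioo_mem_nhdsGT hε] with r hr
    have hp : 0 < r ^ δ₀ := Real.rpow_pos_of_pos hr.1 _
    rw [Real.rpow_sub hr.1, ← mul_div_assoc, le_div_iff₀ hp]
    exact h r hr.1 hr.2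
  exact absurd (ge_of_tendsto hlim hev) (not_le.2 ha)

theorem kernel_sum_sharp (K : ℕ) (m : ℝ × ℝ → ℝ) (mi : Fin K → ℝ × ℝ → ℝ)
    (hsum : ∀ p, m p = ∑ i, mi i p)
    (hcpt : ∀ i, HasCompactSupport (mi i)) (hnn : ∀ i p, 0 ≤ mi i p)
    (z : Fin K → ℝ × ℝ) (U : Fin K → Set (ℝ × ℝ)) (n : Fin K → ℕ)
    (f : (i : Fin K) → Fin (n i) → ℝ × ℝ → ℝ) (γ : (i : Fin K) → Fin (n i) → ℝ)
    (E : Fin K → Set (ℝ × ℝ)) (α : Fin K → ℝ × ℝ → ℝ) (A : ℝ)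
    (hstd : ∀ i, StandardFormOn (U i) (n i) (f i) (γ i) (E i))
    (hα : ∀ i, AlphaBoundOn (U i) (α i) A)
    (hsupp : ∀ i p, z i + p ∈ tsupport (mi i) → p ∈ U i)
    (hform : ∀ i, ∀ᵐ p : ℝ × ℝ, p ∈ U i →
      mi i (z i + p) = α i p * stdFun (n i) (f i) (γ i) (E i) p)
    (i₀ : Fin K) (c : ℝ) (hc : 0 < c)
    (hαc : ∀ᶠ p in 𝓝[≠] (0 : ℝ × ℝ), p ∈ E i₀ → c < α i₀ p)
    (v : ℝ × ℝ) (hv : nrm2 v = 1) (δv : ℝ) (ev : ℕ)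
    (hstrip : IsStripExponent (stdFun (n i₀) (f i₀) (γ i₀) (E i₀)) v δv ev)
    (hδv : δv < 1) (H : ℝ) (hH : 0 < H) (δ : ℝ) (hδ : δv < δ) :
    ¬ ∃ C : ℝ, ∀ q ∈ lineNbhd v H, ‖kernel2 m q‖ ≤ C * (2 + nrm2 q) ^ (-δ) := by
  rintro ⟨C, hC⟩
  set g := stdFun (n i₀) (f i₀) (γ i₀) (E i₀) with hgdef
  have hmi : ∀ i, Integrable (mi i) := fun i =>
    integrable_of_eq_mul_on (hstd i).isOpen (hstd i).integrable (hα i) (hsupp i) (hform i)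
  have hm : Integrable m := by
    rw [show m = fun p => ∑ i, mi i p from funext hsum]
    exact integrable_finsetSum _ fun i _ => hmi i
  have hm0 : ∀ p, 0 ≤ m p := fun p => hsum p ▸ Finset.sum_nonneg fun i _ => hnn i p
  have hle : ∀ p, mi i₀ p ≤ m p := fun p =>
    hsum p ▸ Finset.single_le_sum (f := fun i => mi i p) (fun i _ => hnn i p) (Finset.mem_univ i₀)
  obtain ⟨δ', hδ'1, hδ'2⟩ : ∃ δ', δv < δ' ∧ δ' < min δ 1 := exists_between (lt_min hδ hδv)
  obtain ⟨hδ'δ, hδ'1'⟩ := lt_min_iff.1 hδ'2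
  have hδ'0 : 0 < δ' := hstrip.1.trans hδ'1
  have hK : ∀ s : ℝ, s ≠ 0 → ‖kernel2 m (s • v)‖ ≤ |C| * |s| ^ (-δ') := by
    intro s hs
    have hmem : s • v ∈ lineNbhd v H := ⟨s, by simp [nrm2, hH.le]⟩
    refine (hC _ hmem).trans ?_
    rw [nrm2_smul_unit hv]
    have hs' : 0 < |s| := abs_pos.2 hs
    have h1 : (2 + |s|) ^ (-δ) ≤ |s| ^ (-δ') :=
      (Real.rpow_le_rpow_of_exponent_le (by linarith) (by linarith)).trans
        (Real.rpow_le_rpow_of_nonpos hs' (by linarith) (by linarith))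
    exact mul_le_mul (le_abs_self C) h1 (by positivity) (abs_nonneg C)
  obtain ⟨D, hD⟩ := slab_mass_le_of_kernel2_decay hm hm0 v hδ'1' hK (dot2 (z i₀) v)
  obtain ⟨ρ, hρ, hρU, hρα⟩ : ∃ ρ > 0, (∀ p : ℝ × ℝ, ‖p‖ < ρ → p ∈ U i₀) ∧
      ∀ p : ℝ × ℝ, ‖p‖ < ρ → p ≠ 0 → p ∈ E i₀ → c < α i₀ p := by
    have hU : ∀ᶠ p in 𝓝 (0 : ℝ × ℝ), p ∈ U i₀ := (hstd i₀).isOpen.mem_nhds (hstd i₀).zero_mem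
    obtain ⟨ρ, hρ, h⟩ := Metric.eventually_nhds_iff.1
      (hU.and (eventually_nhdsWithin_iff.1 hαc))
    exact ⟨ρ, hρ, fun p hp => (h (by simpa using hp)).1,
      fun p hp hp0 => (h (by simpa using hp)).2 hp0⟩
  obtain ⟨-, -, cv, hcv, hcomp⟩ := hstrip
  obtain ⟨c', hc'0, hc'⟩ : ∃ c', 0 < c' ∧ c' < min cv (ρ / 2) :=
    exists_between (lt_min hcv (half_pos hρ))
  obtain ⟨hc'1, hc'2⟩ := lt_min_iff.1 hc'
  obtain ⟨a, ha, _, _, hab⟩ := hcomp c' hc'0 hc'1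
  refine not_rpow_le_mul_rpow_near_zero (D := D) hδ'1 (mul_pos hc ha)
    (lt_min hc'0 (Real.exp_pos (-1))) fun r hr hr' => ?_
  obtain ⟨hrc, hre⟩ := lt_min_iff.1 hr'
  have hsub : ∀ p ∈ strip2 v r c', ‖p‖ < ρ := fun p hp => by
    linarith [norm_le_of_mem_strip2 hv hp]
  have hlog : 1 ≤ |Real.log r| := by
    have : Real.log r < -1 := (Real.log_lt_iff_lt_exp hr).2 hre
    rw [abs_of_neg (by linarith)]
    linarith
  have hlow : a * r ^ δv ≤ ∫ p in strip2 v r c', g p :=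
    (le_mul_of_one_le_right (by positivity) (one_le_pow₀ hlog)).trans (hab r hr hrc).1
  have hdom : ∀ᵐ p : ℝ × ℝ, p ∈ strip2 v r c' → c * g p ≤ m (z i₀ + p) := by
    have h0 : ∀ᵐ p : ℝ × ℝ, p ≠ 0 := by simp [ae_iff]
    filter_upwards [hform i₀, h0] with p hp hp0 hps
    refine le_trans ?_ (hle _)
    rw [hp (hρU p (hsub p hps))]
    by_cases hE : p ∈ E i₀
    · exact mul_le_mul_of_nonneg_right (hρα p (hsub p hps) hp0 hE).le (stdFun_nonneg _ _ _ _ p)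
    · simp [hgdef, stdFun, hE]
  have hslab := strip_mass_le_slab_mass hm hm0
    ((hstd i₀).integrable.mono_set fun p hp => hρU p (hsub p hp)) hdom
  calc c * a * r ^ δv = c * (a * r ^ δv) := by ring
    _ ≤ c * ∫ p in strip2 v r c', g p := mul_le_mul_of_nonneg_left hlow hc.le
    _ ≤ D * r ^ δ' := hslab.trans (hD r hr)
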